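/- For each integer $n\ge 1$ let $m(n)$ be a positive integer, and let $X=(X_{ij})_{1\le i,j\le n}$ be the random $n\times n$ matrix whose entry $X_{ij}$ is the number of those among $m(n)$ independent, uniformly distributed random points of the grid $\{1,\dots,n\}\times\{1,\dots,n\}$ that fall in the cell $(i,j)$; that is, $X$ has the multinomial distribution with $m(n)$ trials and $n^2$ equiprobable cells. Let $S_n$ be the group of permutations of $\{1,\dots,n\}$. Let $c<1$ be a real number and suppose that $$\limsup_{n\to\infty}\frac{m(n)\,n^{-2}}{\log n}\le c,$$ where the limsup is taken in $[-\infty,\infty]$. Then $$\lim_{n\to\infty}\mathbb P\Big(\min_{\sigma\in S_n}\sum_{i=1}^n X_{i\sigma(i)}=0\Big)=1.$$ -/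

import Mathlib

open MeasureTheory Filter

noncomputable section

/-- The uniform probability measure on the `n × n` grid of cells (for `n ≥ 1`). -/
def cellMeasure (n : ℕ) : Measure (Fin n × Fin n) :=
  ((n : ENNReal) ^ 2)⁻¹ • Measure.count

/-- The law of `m` i.i.d. points, each uniformly distributed on the `n × n` grid;
under this measure the matrix of cell counts is multinomial `M(m, n²)`. -/
def gridMeasure (m n : ℕ) : Measure (Fin m → Fin n × Fin n) :=
  Measure.pi fun _ => cellMeasure n

/-- `X_{ij}`: the number of the `m` points falling in cell `(i, j)`. -/
def cellCount {m n : ℕ} (i j : Fin n) (ω : Fin m → Fin n × Fin n) : ℕ :=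
  (Finset.univ.filter fun k => ω k = (i, j)).card

/-- The assignment sum `S(σ) = ∑ i, X_{i σ(i)}`. -/
def assignSum {m n : ℕ} (σ : Equiv.Perm (Fin n)) (ω : Fin m → Fin n × Fin n) : ℝ :=
  ∑ i, (cellCount i (σ i) ω : ℝ)

/-- `min_{σ ∈ S_n} S(σ)`; the infimum is over a finite nonempty set, so it is attained. -/
def minAssign {m n : ℕ} (ω : Fin m → Fin n × Fin n) : ℝ :=
  ⨅ σ : Equiv.Perm (Fin n), assignSum σ ω

end

/-!
By Hall's theorem, if no permutation avoids the occupied cells then some rectangle `s × t` with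
`|s| + |t| = n + 1` is fully occupied. Occupation events are negatively dependent: a given set of
cells is fully occupied with probability at most the product of the individual probabilities.
So with `q = (1 - n⁻²) ^ m` the probability that a given cell is empty, a rectangle is full with
probability at most `(1 - q) ^ (|s| |t|)`. If `k` is the length of its shorter side, there are at
most `n ^ (2 k)` such rectangles and the longer side is at least `n / 2`, which bounds their
contribution by `(n² exp (-q n / 2)) ^ k`. For `m ≤ c n² log n` with `c < 1` one has
`q ≥ n⁻ᶜ / e`, so `q n` grows like a positive power of `n` and the union bound tends to `0`.
-/

open Finset.HasAntidiagonal (antidiagonal mem_antidiagonal)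

section NegativeDependence

open ProbabilityTheory

theorem prod_add_sum_mul_prod_erase_le_prod_add {ι R : Type*} [DecidableEq ι] [CommSemiring R]
    [PartialOrder R] [IsOrderedRing R] {s : Finset ι} {f g : ι → R}
    (hf : ∀ i ∈ s, 0 ≤ f i) (hg : ∀ i ∈ s, 0 ≤ g i) :
    ∏ i ∈ s, f i + ∑ i ∈ s, g i * ∏ j ∈ s.erase i, f j ≤ ∏ i ∈ s, (f i + g i) := by
  induction s using Finset.induction_on with
  | empty => simp
  | insert a s ha ih =>
    obtain ⟨hfa, hfs⟩ := (Finset.forall_mem_insert a s _).1 hf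
    obtain ⟨hga, hgs⟩ := (Finset.forall_mem_insert a s _).1 hg
    have herase : ∀ i ∈ s, ∏ j ∈ (insert a s).erase i, f j = f a * ∏ j ∈ s.erase i, f j := by
      intro i hi
      rw [Finset.erase_insert_of_ne (by rintro rfl; exact ha hi),
        Finset.prod_insert (fun h => ha (Finset.mem_of_mem_erase h))]
    calc ∏ i ∈ insert a s, f i + ∑ i ∈ insert a s, g i * ∏ j ∈ (insert a s).erase i, f j
        = f a * (∏ i ∈ s, f i + ∑ i ∈ s, g i * ∏ j ∈ s.erase i, f j)
            + g a * ∏ i ∈ s, f i := by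
          rw [Finset.prod_insert ha, Finset.sum_insert ha, Finset.erase_insert ha,
            Finset.sum_congr rfl fun i hi => by rw [herase i hi, mul_left_comm],
            ← Finset.mul_sum]
          ring
      _ ≤ f a * ∏ i ∈ s, (f i + g i) + g a * ∏ i ∈ s, (f i + g i) := by
          gcongr with i hi
          · exact ih hfs hgs
          · exact hfs
          · exact le_add_of_nonneg_right (hgs i hi)
      _ = ∏ i ∈ insert a s, (f i + g i) := by rw [Finset.prod_insert ha, add_mul]

theorem one_sub_sum_mul_prod_add_sum_mul_prod_erase_le {ι R : Type*} [DecidableEq ι] [CommRing R]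
    [PartialOrder R] [IsOrderedRing R] {s : Finset ι} {p u : ι → R} (hp : ∀ i ∈ s, 0 ≤ p i)
    (hu0 : ∀ i ∈ s, 0 ≤ u i) (hu1 : ∀ i ∈ s, u i ≤ 1) :
    (1 - ∑ i ∈ s, p i) * ∏ i ∈ s, u i + ∑ i ∈ s, p i * ∏ j ∈ s.erase i, u j ≤
      ∏ i ∈ s, (u i + p i * (1 - u i)) := by
  have hsum : ∑ i ∈ s, p i * ∏ j ∈ s.erase i, u j = (∑ i ∈ s, p i) * ∏ i ∈ s, u i +
      ∑ i ∈ s, p i * (1 - u i) * ∏ j ∈ s.erase i, u j := by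
    rw [Finset.sum_mul, ← Finset.sum_add_distrib]
    refine Finset.sum_congr rfl fun i hi => ?_
    rw [← Finset.mul_prod_erase s u hi]
    ring
  refine le_trans (le_of_eq ?_) (prod_add_sum_mul_prod_erase_le_prod_add hu0
    fun i hi => mul_nonneg (hp i hi) (sub_nonneg.2 (hu1 i hi)))
  rw [hsum]
  ring

theorem biInter_union_subset_of_pairwiseDisjoint {Ω ι : Type*} [DecidableEq ι] {A : Finset ι}
    {B : ι → Set Ω} (hB : (A : Set ι).PairwiseDisjoint B) (U : ι → Set Ω) :
    ⋂ i ∈ A, (B i ∪ U i) ⊆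
      ((⋃ i ∈ A, B i)ᶜ ∩ ⋂ i ∈ A, U i) ∪ ⋃ a ∈ A, (B a ∩ ⋂ i ∈ A.erase a, U i) := by
  intro ω hω
  have hω' : ∀ i ∈ A, ω ∈ B i ∪ U i := Set.mem_iInter₂.1 hω
  by_cases h : ω ∈ ⋃ i ∈ A, B i
  · obtain ⟨a, ha, hωa⟩ := Set.mem_iUnion₂.1 h
    refine Or.inr (Set.mem_iUnion₂.2 ⟨a, ha, hωa, Set.mem_iInter₂.2 fun i hi => ?_⟩)
    obtain ⟨hia, hiA⟩ := Finset.mem_erase.1 hi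
    exact (hω' i hiA).resolve_left (Set.disjoint_left.1 (hB ha hiA hia.symm) hωa)
  · refine Or.inl ⟨h, Set.mem_iInter₂.2 fun i hi => ?_⟩
    exact (hω' i hi).resolve_left fun hBi => h (Set.mem_iUnion₂.2 ⟨i, hi, hBi⟩)

variable {Ω ι κ : Type*} [mΩ : MeasurableSpace Ω] {μ : Measure Ω} [IsProbabilityMeasure μ]

-- Split according to which of the disjoint `B i`, if any, occurs: the resulting bound is the part
-- of degree at most one, in the probabilities of the `B i`, of the expanded product.
theorem measureReal_biInter_union_le_prod {m₁ m₂ : MeasurableSpace Ω} (hm₁ : m₁ ≤ mΩ)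
    (hm₂ : m₂ ≤ mΩ) (hindep : Indep m₁ m₂ μ) {B U : ι → Set Ω}
    (hB : ∀ i, MeasurableSet[m₁] (B i)) (hU : ∀ i, MeasurableSet[m₂] (U i))
    {A : Finset ι} (hdisj : (A : Set ι).PairwiseDisjoint B)
    (hprod : ∀ s ⊆ A, μ.real (⋂ i ∈ s, U i) ≤ ∏ i ∈ s, μ.real (U i)) :
    μ.real (⋂ i ∈ A, (B i ∪ U i)) ≤ ∏ i ∈ A, μ.real (B i ∪ U i) := by
  classical
  have hinter {s t : Set Ω} (hs : MeasurableSet[m₁] s) (ht : MeasurableSet[m₂] t) :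
      μ.real (s ∩ t) = μ.real s * μ.real t := by
    simp only [measureReal_def, (Indep_iff m₁ m₂ μ).1 hindep s t hs ht, ENNReal.toReal_mul]
  have hUs (s : Finset ι) : MeasurableSet[m₂] (⋂ i ∈ s, U i) :=
    Finset.measurableSet_biInter s fun i _ => hU i
  have hunion (i : ι) : μ.real (B i ∪ U i) =
      μ.real (U i) + μ.real (B i) * (1 - μ.real (U i)) := by
    linarith [measureReal_union_add_inter (μ := μ) (s := B i) (hm₂ _ (hU i)), hinter (hB i) (hU i)]
  have hcompl : μ.real (⋃ i ∈ A, B i)ᶜ = 1 - ∑ i ∈ A, μ.real (B i) := by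
    rw [probReal_compl_eq_one_sub (Finset.measurableSet_biUnion A fun i _ => hm₁ _ (hB i)),
      measureReal_biUnion_finset hdisj fun i _ => hm₁ _ (hB i)]
  calc μ.real (⋂ i ∈ A, (B i ∪ U i))
      ≤ μ.real ((⋃ i ∈ A, B i)ᶜ ∩ ⋂ i ∈ A, U i) +
          ∑ a ∈ A, μ.real (B a ∩ ⋂ i ∈ A.erase a, U i) := by
        refine (measureReal_mono (biInter_union_subset_of_pairwiseDisjoint hdisj U)).trans
          ((measureReal_union_le _ _).trans ?_)
        gcongr
        exact measureReal_biUnion_finset_le _ _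
    _ = μ.real (⋃ i ∈ A, B i)ᶜ * μ.real (⋂ i ∈ A, U i) +
          ∑ a ∈ A, μ.real (B a) * μ.real (⋂ i ∈ A.erase a, U i) := by
        rw [hinter (Finset.measurableSet_biUnion A fun i _ => hB i).compl (hUs A)]
        exact congrArg _ (Finset.sum_congr rfl fun a _ => hinter (hB a) (hUs _))
    _ ≤ μ.real (⋃ i ∈ A, B i)ᶜ * ∏ i ∈ A, μ.real (U i) +
          ∑ a ∈ A, μ.real (B a) * ∏ i ∈ A.erase a, μ.real (U i) := by
        gcongr
        · exact hprod A subset_rfl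
        · exact hprod _ (A.erase_subset a)
    _ ≤ ∏ i ∈ A, μ.real (B i ∪ U i) := by
        simp only [hcompl, hunion]
        exact one_sub_sum_mul_prod_add_sum_mul_prod_erase_le (fun _ _ => measureReal_nonneg)
          (fun _ _ => measureReal_nonneg) fun _ _ => measureReal_le_one

theorem measureReal_biInter_biUnion_le_prod_of_iIndep {m : κ → MeasurableSpace Ω}
    (hm : ∀ k, m k ≤ mΩ) (hindep : iIndep m μ) {H : κ → ι → Set Ω}
    (hH : ∀ k i, MeasurableSet[m k] (H k i)) {A : Finset ι}
    (hdisj : ∀ k, (A : Set ι).PairwiseDisjoint (H k)) (K : Finset κ) :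
    μ.real (⋂ i ∈ A, ⋃ k ∈ K, H k i) ≤ ∏ i ∈ A, μ.real (⋃ k ∈ K, H k i) := by
  classical
  induction K using Finset.induction_on generalizing A with
  | empty =>
    rcases A.eq_empty_or_nonempty with rfl | ⟨a, ha⟩
    · simp
    · have hempty : ⋂ i ∈ A, ⋃ k ∈ (∅ : Finset κ), H k i = ∅ :=
        Set.subset_empty_iff.1 ((Set.biInter_subset_of_mem ha).trans (by simp))
      rw [hempty, measureReal_empty]
      exact Finset.prod_nonneg fun _ _ => measureReal_nonneg
  | insert k K hk ih =>
    have hindepK : Indep (m k) (⨆ l ∈ (K : Set κ), m l) μ := by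
      simpa only [iSup_singleton] using
        indep_iSup_of_disjoint hm hindep (Set.disjoint_singleton_left.2 hk)
    have hHK (i : ι) : MeasurableSet[⨆ l ∈ (K : Set κ), m l] (⋃ l ∈ K, H l i) :=
      Finset.measurableSet_biUnion K fun l hl =>
        le_iSup₂ (f := fun l (_ : l ∈ (K : Set κ)) => m l) l hl _ (hH l i)
    simp only [Finset.set_biUnion_insert]
    exact measureReal_biInter_union_le_prod (hm k) (iSup₂_le fun l _ => hm l) hindepK (hH k) hHK
      (hdisj k) fun s hs => ih fun l => (hdisj l).subset hs

variable {α : Type*} [MeasurableSpace α] [Fintype κ] (ν : Measure α) [IsProbabilityMeasure ν]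

theorem measureReal_pi_exists_mem {B : Set α} (hB : MeasurableSet B) :
    (Measure.pi fun _ : κ => ν).real {ω | ∃ k, ω k ∈ B} =
      1 - (1 - ν.real B) ^ Fintype.card κ := by
  have hcompl : {ω : κ → α | ∃ k, ω k ∈ B} = (Set.univ.pi fun _ => Bᶜ)ᶜ := by
    ext ω
    simp
  rw [hcompl, probReal_compl_eq_one_sub (MeasurableSet.univ_pi fun _ => hB.compl),
    measureReal_def, Measure.pi_pi, Finset.prod_const, ENNReal.toReal_pow, ← measureReal_def,
    probReal_compl_eq_one_sub hB, Finset.card_univ]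

theorem measureReal_pi_subset_range_le [MeasurableSingletonClass α] (A : Finset α) :
    (Measure.pi fun _ : κ => ν).real {ω | (A : Set α) ⊆ Set.range ω} ≤
      ∏ a ∈ A, (1 - (1 - ν.real {a}) ^ Fintype.card κ) := by
  have hindep : iIndepFun (fun (k : κ) (ω : κ → α) => ω k) (Measure.pi fun _ => ν) :=
    iIndepFun_pi (X := fun _ => id) fun _ => aemeasurable_id
  have hle := measureReal_biInter_biUnion_le_prod_of_iIndep (H := fun k a => {ω | ω k = a})
    (fun k => (measurable_pi_apply k).comap_le) hindep.iIndep
    (fun k a => ⟨{a}, measurableSet_singleton a, rfl⟩) (A := A)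
    (fun k a _ b _ hab => Set.disjoint_left.2 fun ω ha hb => hab (ha.symm.trans hb)) Finset.univ
  convert! hle using 2 with a
  · ext ω
    simp [Set.subset_def]
  · rw [← measureReal_pi_exists_mem ν (measurableSet_singleton a)]
    congr 1
    ext ω
    simp

end NegativeDependence

section Matching

theorem exists_equiv_forall_rel_or_exists_card_add_card_eq_succ {α β : Type*} [Fintype α]
    [Fintype β] (hcard : Fintype.card α = Fintype.card β) (r : α → β → Prop) :
    (∃ e : α ≃ β, ∀ a, r a (e a)) ∨
      ∃ (s : Finset α) (t : Finset β), s.card + t.card = Fintype.card β + 1 ∧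
        ∀ a ∈ s, ∀ b ∈ t, ¬r a b := by
  classical
  by_cases hall : ∀ s : Finset α, s.card ≤ (Finset.univ.filter fun b => ∃ a ∈ s, r a b).card
  · obtain ⟨f, hf, hfr⟩ := (Fintype.all_card_le_filter_rel_iff_exists_injective r).1 hall
    exact Or.inl ⟨Equiv.ofBijective f ((Fintype.bijective_iff_injective_and_card f).2
      ⟨hf, hcard⟩), hfr⟩
  · push Not at hall
    obtain ⟨s, hs⟩ := hall
    set N := Finset.univ.filter fun b => ∃ a ∈ s, r a b
    have hsα : s.card ≤ Fintype.card β := hcard ▸ s.card_le_univ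
    have hNcard : Fintype.card β + 1 - s.card ≤ Nᶜ.card := by
      rw [Finset.card_compl]
      omega
    obtain ⟨t, htN, ht⟩ := Finset.exists_subset_card_eq hNcard
    refine Or.inr ⟨s, t, by omega, fun a ha b hb hab => Finset.mem_compl.1 (htN hb) ?_⟩
    exact Finset.mem_filter.2 ⟨Finset.mem_univ b, a, ha, hab⟩

variable {m n : ℕ}

theorem cellCount_eq_zero_iff {i j : Fin n} {ω : Fin m → Fin n × Fin n} :
    cellCount i j ω = 0 ↔ (i, j) ∉ Set.range ω := by
  simp [cellCount, Finset.filter_eq_empty_iff]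

theorem minAssign_eq_zero_iff {ω : Fin m → Fin n × Fin n} :
    minAssign ω = 0 ↔ ∃ σ : Equiv.Perm (Fin n), ∀ i, (i, σ i) ∉ Set.range ω := by
  have hnonneg (σ : Equiv.Perm (Fin n)) : 0 ≤ assignSum σ ω :=
    Finset.sum_nonneg fun _ _ => Nat.cast_nonneg _
  have hsum (σ : Equiv.Perm (Fin n)) :
      assignSum σ ω = 0 ↔ ∀ i, (i, σ i) ∉ Set.range ω := by
    simp [assignSum, Finset.sum_eq_zero_iff_of_nonneg, cellCount_eq_zero_iff]
  simp only [← hsum]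
  constructor
  · intro h
    obtain ⟨σ, hσ⟩ := exists_eq_ciInf_of_finite (f := fun σ => assignSum σ ω)
    exact ⟨σ, hσ.trans h⟩
  · rintro ⟨σ, hσ⟩
    exact le_antisymm ((ciInf_le (Set.finite_range _).bddBelow σ).trans_eq hσ) (le_ciInf hnonneg)

theorem exists_product_subset_range_of_minAssign_ne_zero {ω : Fin m → Fin n × Fin n}
    (h : minAssign ω ≠ 0) :
    ∃ s t : Finset (Fin n), s.card + t.card = n + 1 ∧
      ((s ×ˢ t : Finset (Fin n × Fin n)) : Set (Fin n × Fin n)) ⊆ Set.range ω := by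
  rcases exists_equiv_forall_rel_or_exists_card_add_card_eq_succ rfl
    fun i j : Fin n => (i, j) ∉ Set.range ω with hσ | ⟨s, t, hst, hocc⟩
  · exact absurd (minAssign_eq_zero_iff.2 hσ) h
  · refine ⟨s, t, by rwa [Fintype.card_fin] at hst, fun p hp => ?_⟩
    obtain ⟨hs, ht⟩ := Finset.mem_product.1 hp
    exact not_not.1 (hocc p.1 hs p.2 ht)

end Matching

section UnionBound

theorem cellMeasure_real_singleton {n : ℕ} (a : Fin n × Fin n) :
    (cellMeasure n).real {a} = ((n : ℝ) ^ 2)⁻¹ := by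
  simp [cellMeasure, measureReal_def]

variable (m n : ℕ) [NeZero n]

instance isProbabilityMeasure_cellMeasure : IsProbabilityMeasure (cellMeasure n) := by
  refine ⟨?_⟩
  have hn : (n : ENNReal) ^ 2 ≠ 0 := pow_ne_zero 2 (NeZero.ne _)
  simpa [cellMeasure, ← sq] using ENNReal.inv_mul_cancel hn (by finiteness)

instance isProbabilityMeasure_gridMeasure : IsProbabilityMeasure (gridMeasure m n) := by
  unfold gridMeasure
  infer_instance

theorem gridMeasure_real_subset_range_le (A : Finset (Fin n × Fin n)) :
    (gridMeasure m n).real {ω | (A : Set (Fin n × Fin n)) ⊆ Set.range ω} ≤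
      (1 - (1 - ((n : ℝ) ^ 2)⁻¹) ^ m) ^ A.card := by
  simpa [gridMeasure, cellMeasure_real_singleton] using
    measureReal_pi_subset_range_le (κ := Fin m) (cellMeasure n) A

theorem gridMeasure_real_minAssign_ne_zero_le_sum :
    (gridMeasure m n).real {ω | minAssign ω ≠ 0} ≤
      ∑ p ∈ antidiagonal (n + 1), (n.choose p.1 * n.choose p.2 : ℝ) *
        (1 - (1 - ((n : ℝ) ^ 2)⁻¹) ^ m) ^ (p.1 * p.2) := by
  classical
  have hcover : {ω : Fin m → Fin n × Fin n | minAssign ω ≠ 0} ⊆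
      ⋃ p ∈ antidiagonal (n + 1),
        ⋃ r ∈ Finset.univ.powersetCard p.1 ×ˢ Finset.univ.powersetCard p.2,
          {ω | ((r.1 ×ˢ r.2 : Finset (Fin n × Fin n)) : Set (Fin n × Fin n)) ⊆ Set.range ω} := by
    intro ω hω
    obtain ⟨s, t, hst, hocc⟩ := exists_product_subset_range_of_minAssign_ne_zero hω
    refine Set.mem_iUnion₂.2 ⟨(s.card, t.card), mem_antidiagonal.2 hst,
      Set.mem_iUnion₂.2 ⟨(s, t), ?_, hocc⟩⟩
    simp
  have hcount (p : ℕ × ℕ) :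
      ∑ r ∈ Finset.univ.powersetCard p.1 ×ˢ Finset.univ.powersetCard p.2,
        (gridMeasure m n).real
          {ω | ((r.1 ×ˢ r.2 : Finset (Fin n × Fin n)) : Set (Fin n × Fin n)) ⊆ Set.range ω} ≤
      (n.choose p.1 * n.choose p.2 : ℝ) * (1 - (1 - ((n : ℝ) ^ 2)⁻¹) ^ m) ^ (p.1 * p.2) := by
    refine (Finset.sum_le_card_nsmul _ _ _ fun r hr => ?_).trans_eq
      (b := _ • (1 - (1 - ((n : ℝ) ^ 2)⁻¹) ^ m) ^ (p.1 * p.2)) ?_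
    · obtain ⟨hs, ht⟩ := Finset.mem_product.1 hr
      rw [← (Finset.mem_powersetCard.1 hs).2, ← (Finset.mem_powersetCard.1 ht).2,
        ← Finset.card_product]
      exact gridMeasure_real_subset_range_le m n (r.1 ×ˢ r.2)
    · simp [Finset.card_product]
  refine (measureReal_mono hcover (measure_ne_top _ _)).trans <|
    (measureReal_biUnion_finset_le _ _).trans <| Finset.sum_le_sum fun p _ => ?_
  exact (measureReal_biUnion_finset_le _ _).trans (hcount p)

end UnionBound

section Estimates

theorem choose_mul_choose_le_pow {n k l : ℕ} (hkl : k + l = n + 1) :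
    n.choose k * n.choose l ≤ (n ^ 2) ^ k := by
  rcases n.eq_zero_or_pos with rfl | hn
  · rcases k with _ | k <;> simp_all
  rcases k with _ | k
  · simp [show l = n + 1 by omega]
  · have hsymm : n.choose l = n.choose k := Nat.choose_symm_of_eq_add (by omega)
    calc n.choose (k + 1) * n.choose l ≤ n ^ (k + 1) * n ^ k := by
          rw [hsymm]
          exact Nat.mul_le_mul (n.choose_le_pow _) (n.choose_le_pow _)
      _ ≤ (n ^ 2) ^ (k + 1) := by
          rw [← pow_add, ← pow_mul]
          exact Nat.pow_le_pow_right hn (by omega)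

theorem choose_mul_choose_mul_one_sub_pow_le {n k l : ℕ} {q : ℝ} (hq0 : 0 ≤ q) (hq1 : q ≤ 1)
    (hkl : k + l = n + 1) (hle : k ≤ l) :
    (n.choose k * n.choose l : ℝ) * (1 - q) ^ (k * l) ≤
      ((n : ℝ) ^ 2 * Real.exp (-(q * n / 2))) ^ k := by
  have hl : (n : ℝ) ≤ 2 * l := by exact_mod_cast (by omega : n ≤ 2 * l)
  have hpow : (1 - q) ^ l ≤ Real.exp (-(q * n / 2)) :=
    calc (1 - q) ^ l ≤ Real.exp (-q) ^ l :=
          pow_le_pow_left₀ (by linarith) (Real.one_sub_le_exp_neg q) l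
      _ ≤ Real.exp (-(q * n / 2)) := by
          rw [← Real.exp_nat_mul, Real.exp_le_exp]
          nlinarith
  rw [mul_comm k l, pow_mul, mul_pow]
  have : 0 ≤ (1 - q) ^ l := pow_nonneg (sub_nonneg.2 hq1) l
  gcongr
  exact_mod_cast choose_mul_choose_le_pow hkl

theorem sum_antidiagonal_choose_mul_choose_mul_one_sub_pow_le {n : ℕ} {q : ℝ}
    (hq0 : 0 ≤ q) (hq1 : q ≤ 1) (hsmall : (n : ℝ) ^ 2 * Real.exp (-(q * n / 2)) ≤ 1) :
    ∑ p ∈ antidiagonal (n + 1), (n.choose p.1 * n.choose p.2 : ℝ) *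
      (1 - q) ^ (p.1 * p.2) ≤ (n + 2) * ((n : ℝ) ^ 2 * Real.exp (-(q * n / 2))) := by
  have hterm {k l : ℕ} (hkl : k + l = n + 1) (hle : k ≤ l) :
      (n.choose k * n.choose l : ℝ) * (1 - q) ^ (k * l) ≤
        (n : ℝ) ^ 2 * Real.exp (-(q * n / 2)) := by
    rcases k.eq_zero_or_pos with rfl | hk
    · rw [show n.choose l = 0 from Nat.choose_eq_zero_of_lt (by omega), Nat.cast_zero, mul_zero,
        zero_mul]
      positivity
    · exact (choose_mul_choose_mul_one_sub_pow_le hq0 hq1 hkl hle).trans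
        (pow_le_of_le_one (by positivity) hsmall hk.ne')
  have hsymm : ∀ p ∈ antidiagonal (n + 1), (n.choose p.1 * n.choose p.2 : ℝ) *
      (1 - q) ^ (p.1 * p.2) ≤ (n : ℝ) ^ 2 * Real.exp (-(q * n / 2)) := by
    intro p hp
    have hsum := mem_antidiagonal.1 hp
    rcases le_total p.1 p.2 with hle | hle
    · exact hterm hsum hle
    · rw [mul_comm (n.choose p.1 : ℝ), mul_comm p.1]
      exact hterm ((add_comm _ _).trans hsum) hle
  refine (Finset.sum_le_card_nsmul _ _ _ hsymm).trans_eq ?_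
  rw [Finset.Nat.card_antidiagonal, nsmul_eq_mul]
  push_cast
  ring

theorem exp_one_sub_inv_le {x : ℝ} (hx : 0 < x) : Real.exp (1 - x⁻¹) ≤ x :=
  (Real.le_log_iff_exp_le hx).1 (Real.one_sub_inv_le_log_of_pos hx)

theorem exp_neg_div_sub_one_le_one_sub_inv_pow (m : ℕ) {x : ℝ} (hx : 1 < x) :
    Real.exp (-(m / (x - 1))) ≤ (1 - x⁻¹) ^ m := by
  have hpos : 0 < 1 - x⁻¹ := sub_pos.2 (inv_lt_one_of_one_lt₀ hx)
  have hexponent : -(m / (x - 1)) = m * (1 - (1 - x⁻¹)⁻¹) := by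
    have hx1 : x - 1 ≠ 0 := by linarith
    have hx0 : x ≠ 0 := by linarith
    field_simp
    ring
  rw [hexponent, Real.exp_nat_mul]
  exact pow_le_pow_left₀ (Real.exp_pos _).le (exp_one_sub_inv_le hpos) m

theorem rpow_neg_mul_exp_neg_one_le_one_sub_inv_pow {m : ℕ} {x c : ℝ} (hx : 1 < x) (hc : c ≤ 1)
    (hm : m * (x ^ 2)⁻¹ / Real.log x ≤ c) :
    x ^ (-c) * Real.exp (-1) ≤ (1 - (x ^ 2)⁻¹) ^ m := by
  have hlog : 0 < Real.log x := Real.log_pos hx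
  have hlog_le : Real.log x ≤ x - 1 := Real.log_le_sub_one_of_pos (by linarith)
  have hm' : (m : ℝ) ≤ c * Real.log x * x ^ 2 := by
    rwa [div_le_iff₀ hlog, ← div_eq_mul_inv, div_le_iff₀ (by positivity)] at hm
  have hdiv : m / (x ^ 2 - 1) ≤ c * Real.log x + 1 := by
    rw [div_le_iff₀ (by nlinarith)]
    nlinarith
  refine le_trans ?_ (exp_neg_div_sub_one_le_one_sub_inv_pow m (by nlinarith))
  rw [Real.rpow_def_of_pos (by linarith), ← Real.exp_add, Real.exp_le_exp]
  linarith

theorem tendsto_natCast_pow_mul_exp_neg_mul_rpow (d : ℕ) {a δ : ℝ} (ha : 0 < a) (hδ : 0 < δ) :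
    Tendsto (fun n : ℕ => (n : ℝ) ^ d * Real.exp (-(a * (n : ℝ) ^ δ))) atTop (nhds 0) := by
  refine ((tendsto_rpow_mul_exp_neg_mul_atTop_nhds_zero (d / δ) a ha).comp
    ((tendsto_rpow_atTop hδ).comp tendsto_natCast_atTop_atTop)).congr fun n => ?_
  rw [Function.comp_apply, Function.comp_apply, ← Real.rpow_mul n.cast_nonneg,
    mul_div_cancel₀ _ hδ.ne', Real.rpow_natCast, neg_mul]

end Estimates

theorem gridMeasure_real_minAssign_ne_zero_le (m n : ℕ) [NeZero n] {q : ℝ} (hq0 : 0 ≤ q)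
    (hq : q ≤ (1 - ((n : ℝ) ^ 2)⁻¹) ^ m) :
    (gridMeasure m n).real {ω | minAssign ω ≠ 0} ≤
      (n + 2) * ((n : ℝ) ^ 2 * Real.exp (-(q * n / 2))) := by
  rcases le_total ((n : ℝ) ^ 2 * Real.exp (-(q * n / 2))) 1 with hsmall | hlarge
  · have hn : (1 : ℝ) ≤ (n : ℝ) ^ 2 := one_le_pow₀ (by exact_mod_cast NeZero.one_le)
    have hp0 : 0 ≤ 1 - ((n : ℝ) ^ 2)⁻¹ := sub_nonneg.2 (inv_le_one_of_one_le₀ hn)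
    have hp1 : (1 - ((n : ℝ) ^ 2)⁻¹) ^ m ≤ 1 := pow_le_one₀ hp0 (sub_le_self _ (by positivity))
    refine ((gridMeasure_real_minAssign_ne_zero_le_sum m n).trans ?_).trans
      (sum_antidiagonal_choose_mul_choose_mul_one_sub_pow_le hq0 (hq.trans hp1) hsmall)
    gcongr
  · refine measureReal_le_one.trans (one_le_mul_of_one_le_of_one_le ?_ hlarge)
    linarith [n.cast_nonneg (α := ℝ)]

theorem ofReal_one_sub_le_gridMeasure_minAssign_eq_zero {m n : ℕ} {c : ℝ} (hn : 2 ≤ n)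
    (hc : c ≤ 1) (hm : (m : ℝ) * ((n : ℝ) ^ 2)⁻¹ / Real.log n ≤ c) :
    ENNReal.ofReal (1 - (n + 2) *
        ((n : ℝ) ^ 2 * Real.exp (-(Real.exp (-1) / 2 * (n : ℝ) ^ (1 - c))))) ≤
      gridMeasure m n {ω | minAssign ω = 0} := by
  have : NeZero n := ⟨by omega⟩
  have hn1 : (1 : ℝ) < n := by exact_mod_cast hn
  have hbound := gridMeasure_real_minAssign_ne_zero_le m n (by positivity)
    (rpow_neg_mul_exp_neg_one_le_one_sub_inv_pow hn1 hc hm)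
  have hexponent : (n : ℝ) ^ (-c) * Real.exp (-1) * n / 2 =
      Real.exp (-1) / 2 * (n : ℝ) ^ (1 - c) := by
    rw [sub_eq_neg_add, Real.rpow_add_one (by positivity)]
    ring
  rw [hexponent] at hbound
  have hcompl : (gridMeasure m n).real {ω | minAssign ω ≠ 0} =
      1 - (gridMeasure m n).real {ω | minAssign ω = 0} :=
    probReal_compl_eq_one_sub (Set.toFinite _).measurableSet
  refine ENNReal.ofReal_le_of_le_toReal ?_
  rw [← measureReal_def]
  linarith

/-- If `limsup m(n) n⁻² / log n ≤ c` with `c < 1`, then `P(min_σ ∑ i, X_{i σ(i)} = 0) → 1`.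
The limsup is taken in the extended reals, so that the hypothesis excludes unbounded ratios. -/
theorem min_assignment_vanishes (m : ℕ → ℕ) (hm : ∀ n, 0 < m n) (c : ℝ) (hc1 : c < 1)
    (h : Filter.limsup
      (fun n : ℕ => ((((m n : ℝ) * ((n : ℝ) ^ 2)⁻¹) / Real.log (n : ℝ) : ℝ) : EReal))
      Filter.atTop ≤ (c : EReal)) :
    Filter.Tendsto (fun n : ℕ => gridMeasure (m n) n {ω | minAssign ω = 0}) Filter.atTop
      (nhds (1 : ENNReal)) := by
  obtain ⟨c', hcc', hc'1⟩ := exists_between hc1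
  have hratio : ∀ᶠ n : ℕ in atTop, (m n : ℝ) * ((n : ℝ) ^ 2)⁻¹ / Real.log n ≤ c' := by
    filter_upwards [eventually_lt_of_limsup_lt (h.trans_lt (EReal.coe_lt_coe_iff.2 hcc'))]
      with n hn
    exact (EReal.coe_lt_coe_iff.1 hn).le
  have hdecay (d : ℕ) := tendsto_natCast_pow_mul_exp_neg_mul_rpow d
    (half_pos (Real.exp_pos (-1))) (sub_pos.2 hc'1)
  have hlower : Tendsto (fun n : ℕ => ENNReal.ofReal (1 - (n + 2) *
      ((n : ℝ) ^ 2 * Real.exp (-(Real.exp (-1) / 2 * (n : ℝ) ^ (1 - c')))))) atTop (nhds 1) := by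
    rw [← ENNReal.ofReal_one]
    refine ENNReal.tendsto_ofReal ?_
    convert ((hdecay 3).add ((hdecay 2).const_mul 2)).const_sub 1 using 2 <;> ring
  refine tendsto_of_tendsto_of_tendsto_of_le_of_le' hlower tendsto_const_nhds ?_ ?_
  · filter_upwards [hratio, eventually_ge_atTop 2] with n hn hn2
    exact ofReal_one_sub_le_gridMeasure_minAssign_eq_zero hn2 hc'1.le hn
  · filter_upwards [eventually_ne_atTop 0] with n hn
    have : NeZero n := ⟨hn⟩
    exact prob_le_one
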